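/- Assume λ₂ > 0, X_i ≠ 0 for every column i, and ε > 0 satisfies ε < p λ₁ (‖X_i‖_r/(q λ₁))^{q/(q−1)} for every i. Let (β^k)_{k≥0} be a sequence in ℝ^p such that for every k, β^{k+1} is a global minimizer of G_{w(β^k)}. If β̄ ∈ ℝ^p is the limit of some subsequence β^{k_j} → β̄ (with k_j strictly increasing), then β̄ is a generalized first-order stationary point of F, and for every i with β̄_i ≠ 0 one has |β̄_i| > (q λ₁ / ‖X_i‖_r)^{1/(1−q)}. -/

import Mathlib

/-- Index for the ℓ_r norm with r ∈ {1, 2, ∞}. -/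
inductive LrIndex : Type
  | one | two | inf

/-- The ℓ_r norm on ℝ^n for r ∈ {1, 2, ∞}. -/
noncomputable def lrNorm {n : ℕ} (r : LrIndex) (z : Fin n → ℝ) : ℝ :=
  match r with
  | .one => ∑ j, |z j|
  | .two => Real.sqrt (∑ j, (z j) ^ 2)
  | .inf => ⨆ j, |z j|

/-- `v` is a subgradient of `z ↦ ‖z − y‖_r` at `z₀`. -/
def IsSubgradAt {n : ℕ} (r : LrIndex) (y v z₀ : Fin n → ℝ) : Prop :=
  ∀ z : Fin n → ℝ,
    lrNorm r (z₀ - y) + ∑ j, v j * (z j - z₀ j) ≤ lrNorm r (z - y)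

/-- The objective F(β) = ‖Xβ − y‖_r + λ₂‖β‖₂² + λ₁ Σᵢ |βᵢ|^q. -/
noncomputable def objF {n p : ℕ} (r : LrIndex) (X : Matrix (Fin n) (Fin p) ℝ)
    (y : Fin n → ℝ) (lam1 lam2 q : ℝ) (β : Fin p → ℝ) : ℝ :=
  lrNorm r (X.mulVec β - y) + lam2 * ∑ i, (β i) ^ 2 + lam1 * ∑ i, |β i| ^ q

/-- `β` is a generalized first-order stationary point of F. -/
def IsGenStat {n p : ℕ} (r : LrIndex) (X : Matrix (Fin n) (Fin p) ℝ)
    (y : Fin n → ℝ) (lam1 lam2 q : ℝ) (β : Fin p → ℝ) : Prop :=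
  ∃ v : Fin n → ℝ, IsSubgradAt r y v (X.mulVec β) ∧
    ∀ i : Fin p,
      β i * (∑ j, X j i * v j) + 2 * lam2 * (β i) ^ 2 + lam1 * q * |β i| ^ q = 0

/-- Weighted objective G_w(β) = ‖Xβ − y‖_r + λ₂‖β‖₂² + qλ₁ Σᵢ wᵢ|βᵢ|. -/
noncomputable def objG {n p : ℕ} (r : LrIndex) (X : Matrix (Fin n) (Fin p) ℝ)
    (y : Fin n → ℝ) (lam1 lam2 q : ℝ) (w : Fin p → ℝ) (β : Fin p → ℝ) : ℝ :=
  lrNorm r (X.mulVec β - y) + lam2 * ∑ i, (β i) ^ 2 + q * lam1 * ∑ i, w i * |β i|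

/-- The weight vector w(β) with w(β)ᵢ = u_ε if βᵢ = 0, and min(u_ε, |βᵢ|^{q−1}) otherwise. -/
noncomputable def weightVec {p : ℕ} (q uε : ℝ) (β : Fin p → ℝ) : Fin p → ℝ :=
  fun i => if β i = 0 then uε else min uε (|β i| ^ (q - 1))

/-
Majorization-minimization. Writing the capped weights as `max a |βᵢ| ^ (q - 1)`, tangent lines of
the concave function `t ↦ t ^ q` show that `G_{w(x)}(z)` plus a function of `x` alone is a surrogate
`Q x z` with `Q z z ≤ Q x z`. The values `Q (β^k) (β^k)` decrease, so every cluster point of the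
iteration minimizes its own weighted objective. Hahn-Banach turns this minimality into a
stationarity condition with a subgradient of the norm; as the subgradient is bounded by the norm,
the cap cannot be active at a nonzero coordinate, where the condition thus becomes stationarity
for `F`.
-/

open Filter Set Topology

section MajorizationMinimization

variable {α γ δ : Type*} [TopologicalSpace α] [Preorder γ] [TopologicalSpace γ] [Preorder δ]

theorem le_of_mapClusterPt_of_antitone [ClosedIicTopology γ] {u : δ → γ} (hu : Antitone u) {b : γ}
    (hb : MapClusterPt b atTop u) (k : δ) : b ≤ u k :=
  isClosed_Iic.mem_of_mapClusterPt hb ((eventually_ge_atTop k).mono fun _ hm => hu hm)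

theorem isMinOn_of_mapClusterPt_of_diag_le [OrderClosedTopology γ] {Q : α → α → γ} {x : ℕ → α}
    {a : α} (hle : ∀ x z, Q z z ≤ Q x z) (hmin : ∀ k, IsMinOn (Q (x k)) univ (x (k + 1)))
    (hdiag : ContinuousAt (fun z => Q z z) a) (hleft : ∀ z, ContinuousAt (fun x => Q x z) a)
    (ha : MapClusterPt a atTop x) : IsMinOn (Q a) univ a := by
  have step_le (k : ℕ) (z : α) : Q (x (k + 1)) (x (k + 1)) ≤ Q (x k) z :=
    (hle _ _).trans (hmin k (mem_univ z))
  have diag_antitone : Antitone fun k => Q (x k) (x k) :=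
    antitone_nat_of_succ_le fun k => step_le k (x k)
  have diag_le (k : ℕ) : Q a a ≤ Q (x k) (x k) :=
    le_of_mapClusterPt_of_antitone diag_antitone (ha.continuousAt_comp hdiag) k
  intro z _
  have cluster : MapClusterPt (Q a z) atTop fun k => Q (x k) z := ha.continuousAt_comp (hleft z)
  exact isClosed_Ici.mem_of_mapClusterPt cluster
    (Eventually.of_forall fun k => (diag_le (k + 1)).trans (step_le k z))

end MajorizationMinimization

section PowerTangent

variable {q : ℝ}

/-- The tangent line of `t ↦ t ^ q` at `s`, evaluated at `t`. -/
noncomputable def powTangent (q s t : ℝ) : ℝ :=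
  q * (s ^ (q - 1) * t) + (1 - q) * s ^ q

theorem rpow_sub_one_mul_self {t : ℝ} (ht : 0 < t) : t ^ (q - 1) * t = t ^ q := by
  rw [Real.rpow_sub_one ht.ne', div_mul_cancel₀ _ ht.ne']

theorem powTangent_self {t : ℝ} (ht : 0 < t) : powTangent q t t = t ^ q := by
  rw [powTangent, rpow_sub_one_mul_self ht]
  ring

theorem rpow_le_powTangent (hq0 : 0 ≤ q) (hq1 : q ≤ 1) {s t : ℝ} (hs : 0 < s) (ht : 0 ≤ t) :
    t ^ q ≤ powTangent q s t := by
  have bernoulli : (t / s) ^ q ≤ 1 + q * (t / s - 1) := by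
    simpa using rpow_one_add_le_one_add_mul_self
      (by linarith [div_nonneg ht hs.le] : -1 ≤ t / s - 1) hq0 hq1
  rw [Real.div_rpow ht hs.le, div_le_iff₀ (by positivity)] at bernoulli
  refine bernoulli.trans_eq ?_
  rw [powTangent, Real.rpow_sub_one hs.ne']
  field_simp
  ring

/-- Below `a` both sides are affine in `t`, the left one being steeper, so `t = a` is the worst
case. -/
theorem powTangent_max_le (hq0 : 0 ≤ q) (hq1 : q ≤ 1) {a s t : ℝ} (ha : 0 < a) (has : a ≤ s)
    (ht : 0 ≤ t) : powTangent q (max a t) t ≤ powTangent q s t := by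
  rcases le_total a t with hat | hta
  · rw [max_eq_right hat, powTangent_self (ha.trans_le hat)]
    exact rpow_le_powTangent hq0 hq1 (ha.trans_le has) ht
  · rw [max_eq_left hta]
    have at_a : powTangent q a a ≤ powTangent q s a :=
      (powTangent_self ha).trans_le (rpow_le_powTangent hq0 hq1 (ha.trans_le has) ha.le)
    have slope_le : s ^ (q - 1) ≤ a ^ (q - 1) :=
      Real.rpow_le_rpow_of_nonpos ha has (by linarith)
    have gap_le :
        q * ((a ^ (q - 1) - s ^ (q - 1)) * t) ≤ q * ((a ^ (q - 1) - s ^ (q - 1)) * a) := by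
      gcongr
    simp only [powTangent] at at_a ⊢
    linarith

end PowerTangent

section Reweighting

variable {ι : Type*} [Fintype ι] {φ : (ι → ℝ) → ℝ} {lam1 lam2 q a : ℝ}

/-- The penalty `λ₂ ∑ βᵢ² + μ ∑ wᵢ |βᵢ|` of the weighted objectives. -/
def elasticNet (lam2 mu : ℝ) (w β : ι → ℝ) : ℝ :=
  lam2 * ∑ i, β i ^ 2 + mu * ∑ i, w i * |β i|

/-- The weights `max a |βᵢ| ^ (q - 1)`: for `uε = a ^ (q - 1)` they are the capped weights
`weightVec q uε β`, without a case distinction at `βᵢ = 0`. -/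
noncomputable def truncatedWeight (q a : ℝ) (β : ι → ℝ) : ι → ℝ :=
  fun i => max a |β i| ^ (q - 1)

/-- The surrogate of the reweighting iteration at `x`: the weighted objective with weights taken at
`x`, plus the constants of the tangent lines, which do not affect its minimizers in `z`. -/
noncomputable def reweightedSurrogate (φ : (ι → ℝ) → ℝ) (lam1 lam2 q a : ℝ) (x z : ι → ℝ) : ℝ :=
  φ z + elasticNet lam2 (q * lam1) (truncatedWeight q a x) z
    + lam1 * ∑ i, (1 - q) * max a |x i| ^ q

theorem reweightedSurrogate_eq_sum_powTangent (x z : ι → ℝ) :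
    reweightedSurrogate φ lam1 lam2 q a x z =
      φ z + lam2 * ∑ i, z i ^ 2 + lam1 * ∑ i, powTangent q (max a |x i|) |z i| := by
  simp only [reweightedSurrogate, elasticNet, truncatedWeight, powTangent, Finset.sum_add_distrib,
    ← Finset.mul_sum]
  ring

theorem reweightedSurrogate_self_le (hlam1 : 0 ≤ lam1) (hq0 : 0 ≤ q) (hq1 : q ≤ 1) (ha : 0 < a)
    (x z : ι → ℝ) :
    reweightedSurrogate φ lam1 lam2 q a z z ≤ reweightedSurrogate φ lam1 lam2 q a x z := by
  simp only [reweightedSurrogate_eq_sum_powTangent]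
  gcongr with i
  exact powTangent_max_le hq0 hq1 ha (le_max_left _ _) (abs_nonneg _)

theorem isMinOn_reweightedSurrogate_iff {x b : ι → ℝ} :
    IsMinOn (reweightedSurrogate φ lam1 lam2 q a x) univ b ↔
      IsMinOn (fun z => φ z + elasticNet lam2 (q * lam1) (truncatedWeight q a x) z) univ b := by
  simp only [isMinOn_univ_iff, reweightedSurrogate, add_le_add_iff_right]

theorem continuous_uncurry_reweightedSurrogate (hφ : Continuous φ) (ha : 0 < a) :
    Continuous (Function.uncurry (reweightedSurrogate φ lam1 lam2 q a)) := by
  have max_ne_zero (s : ℝ) : max a s ≠ 0 := (lt_max_of_lt_left ha).ne'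
  have continuous_max_rpow (r : ℝ) (i : ι) :
      Continuous fun x : (ι → ℝ) × (ι → ℝ) => max a |x.1 i| ^ r :=
    Continuous.rpow_const (by fun_prop) fun _ => Or.inl (max_ne_zero _)
  simp only [Function.uncurry_def, reweightedSurrogate, elasticNet, truncatedWeight]
  fun_prop

theorem isMinOn_truncatedWeight_of_mapClusterPt (hφ : Continuous φ) (hlam1 : 0 ≤ lam1)
    (hq0 : 0 ≤ q) (hq1 : q ≤ 1) (ha : 0 < a) {βseq : ℕ → ι → ℝ}
    (hseq : ∀ k, IsMinOn
      (fun β => φ β + elasticNet lam2 (q * lam1) (truncatedWeight q a (βseq k)) β) univ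
      (βseq (k + 1)))
    {βbar : ι → ℝ} (hβbar : MapClusterPt βbar atTop βseq) :
    IsMinOn (fun β => φ β + elasticNet lam2 (q * lam1) (truncatedWeight q a βbar) β) univ βbar := by
  have hcont := continuous_uncurry_reweightedSurrogate (lam1 := lam1) (lam2 := lam2) (q := q) hφ ha
  simp only [← isMinOn_reweightedSurrogate_iff] at hseq ⊢
  exact isMinOn_of_mapClusterPt_of_diag_le (reweightedSurrogate_self_le hlam1 hq0 hq1 ha) hseq
    (hcont.comp (by fun_prop : Continuous fun z => (z, z))).continuousAt
    (fun z => (hcont.comp (by fun_prop : Continuous fun x => (x, z))).continuousAt) hβbar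

end Reweighting

section HahnBanach

variable {V E : Type*} [AddCommGroup V] [Module ℝ V] [AddCommGroup E] [Module ℝ E]

theorem exists_linearMap_comp_eq_of_le_seminorm (N : Seminorm ℝ E) (S : V →ₗ[ℝ] E)
    (f : V →ₗ[ℝ] ℝ) (hf : ∀ x, f x ≤ N (S x)) :
    ∃ g : E →ₗ[ℝ] ℝ, g ∘ₗ S = f ∧ ∀ z, g z ≤ N z := by
  have ker_le : S.ker ≤ f.ker := fun x hx => by
    rw [LinearMap.mem_ker] at hx ⊢
    have le_zero := hf x
    have neg_le_zero := hf (-x)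
    simp only [map_neg, hx, neg_zero, map_zero] at le_zero neg_le_zero
    linarith
  obtain ⟨g₀, hg₀⟩ : f ∈ LinearMap.range S.dualMap := by
    rw [LinearMap.range_dualMap_eq_dualAnnihilator_ker, Submodule.mem_dualAnnihilator]
    exact fun x hx => ker_le hx
  obtain ⟨g, hg_range, hg_le⟩ := exists_extension_of_le_sublinear
    ⟨LinearMap.range S, g₀.domRestrict _⟩ N
    (fun c hc x => by rw [map_smul_eq_mul, Real.norm_of_nonneg hc.le])
    (map_add_le_add N)
    (by
      rintro ⟨_, x, rfl⟩
      exact (LinearMap.congr_fun hg₀ x).trans_le (hf x))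
  exact ⟨g, LinearMap.ext fun x => (hg_range ⟨S x, x, rfl⟩).trans (LinearMap.congr_fun hg₀ x),
    hg_le⟩

theorem exists_linearMap_eq_seminorm_of_add_le (N : Seminorm ℝ E) (a : E) (T : V →ₗ[ℝ] E)
    (c : V →ₗ[ℝ] ℝ) (h : ∀ e, N a + c e ≤ N (a + T e)) :
    ∃ g : E →ₗ[ℝ] ℝ, g a = N a ∧ g ∘ₗ T = c ∧ ∀ z, g z ≤ N z := by
  have scaled (t : ℝ) (ht : 0 < t) (e : V) : t * N a + c e ≤ N (t • a + T e) := by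
    have key := mul_le_mul_of_nonneg_left (h (t⁻¹ • e)) ht.le
    rw [← Real.norm_of_nonneg ht.le, ← map_smul_eq_mul, Real.norm_of_nonneg ht.le, smul_add,
      ← map_smul, smul_inv_smul₀ ht.ne', mul_add, ← smul_eq_mul t (c _), ← map_smul,
      smul_inv_smul₀ ht.ne'] at key
    exact key
  have le_seminorm (e : V) (s : ℝ) : c e + s * N a ≤ N (T e + s • a) := by
    obtain ⟨t, ht, hst⟩ : ∃ t : ℝ, 0 < t ∧ s ≤ t :=
      ⟨|s| + 1, by positivity, by linarith [le_abs_self s]⟩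
    have upper : N (t • a + T e) ≤ N (T e + s • a) + (t - s) * N a := by
      rw [← Real.norm_of_nonneg (sub_nonneg.2 hst), ← map_smul_eq_mul,
        show t • a + T e = T e + s • a + (t - s) • a by module]
      exact map_add_le_add N _ _
    linarith [scaled t ht e]
  obtain ⟨g, hg, hg_le⟩ := exists_linearMap_comp_eq_of_le_seminorm N
    (T.coprod (LinearMap.toSpanSingleton ℝ E a)) (c.coprod (LinearMap.toSpanSingleton ℝ ℝ (N a)))
    (fun x => by simpa using le_seminorm x.1 x.2)
  refine ⟨g, ?_, LinearMap.ext fun e => ?_, hg_le⟩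
  · simpa using LinearMap.congr_fun hg (0, 1)
  · simpa using LinearMap.congr_fun hg (e, 0)

end HahnBanach

section FirstOrder

variable {V E : Type*} [AddCommGroup V] [Module ℝ V] [AddCommGroup E] [Module ℝ E]

theorem convexOn_seminorm_map_sub (N : Seminorm ℝ E) (A : V →ₗ[ℝ] E) (y : E) :
    ConvexOn ℝ univ fun β => N (A β - y) :=
  N.convexOn.comp_affineMap (A.toAffineMap - AffineMap.const ℝ V y)

theorem sub_lineDeriv_le_of_isMinOn_add {φ ψ : E → ℝ} {ψ' : ℝ} {b d : E}
    (hφ : ConvexOn ℝ univ φ) (hψ : HasLineDerivAt ℝ ψ ψ' b d)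
    (hb : IsMinOn (fun z => φ z + ψ z) univ b) : φ b - ψ' ≤ φ (b + d) := by
  suffices φ b - φ (b + d) ≤ ψ' by linarith
  refine ge_of_tendsto (HasDerivAt.tendsto_slope_zero_right hψ) ?_
  filter_upwards [Ioo_mem_nhdsGT one_pos] with t ⟨ht0, ht1⟩
  have convex_le : φ (b + t • d) ≤ (1 - t) * φ b + t * φ (b + d) := by
    have := hφ.2 (mem_univ b) (mem_univ (b + d)) (sub_nonneg.2 ht1.le) ht0.le (sub_add_cancel 1 t)
    rwa [show (1 - t) • b + t • (b + d) = b + t • d by module] at this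
  have min_le : φ b + ψ b ≤ φ (b + t • d) + ψ (b + t • d) := hb (mem_univ _)
  simp only [zero_add, zero_smul, add_zero, smul_eq_mul]
  rw [inv_mul_eq_div, le_div_iff₀ ht0]
  linarith

/-- Moving along `b * e` leaves the zero coordinates of `b` fixed, so the kinks of the absolute
value do not matter. -/
theorem hasLineDerivAt_elasticNet_mul {ι : Type*} [Fintype ι] (lam2 mu : ℝ) (w b e : ι → ℝ) :
    HasLineDerivAt ℝ (elasticNet lam2 mu w)
      (∑ i, (2 * lam2 * b i ^ 2 + mu * (w i * |b i|)) * e i) b (b * e) := by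
  have hasDerivAt_factor (i : ι) : HasDerivAt (fun t : ℝ => 1 + t * e i) (e i) 0 := by
    simpa using ((hasDerivAt_id (0 : ℝ)).mul_const (e i)).const_add 1
  have hasDerivAt_abs_factor (i : ι) : HasDerivAt (fun t : ℝ => |1 + t * e i|) (e i) 0 := by
    simpa [Function.comp_def] using
      (hasDerivAt_abs_pos (by simp : (0 : ℝ) < 1 + 0 * e i)).comp (0 : ℝ) (hasDerivAt_factor i)
  have along_line (t : ℝ) : elasticNet lam2 mu w (b + t • (b * e)) =
      ∑ i, (lam2 * b i ^ 2 * (1 + t * e i) ^ 2 + mu * (w i * |b i|) * |1 + t * e i|) := by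
    simp only [elasticNet, Finset.mul_sum, ← Finset.sum_add_distrib]
    refine Finset.sum_congr rfl fun i _ => ?_
    have factor : (b + t • (b * e)) i = b i * (1 + t * e i) := by
      simp only [Pi.add_apply, Pi.smul_apply, Pi.mul_apply, smul_eq_mul]
      ring
    rw [factor, abs_mul]
    ring
  simp only [HasLineDerivAt, along_line]
  refine HasDerivAt.fun_sum fun i _ => ?_
  refine ((((hasDerivAt_factor i).fun_pow 2).const_mul (lam2 * b i ^ 2)).add
    ((hasDerivAt_abs_factor i).const_mul (mu * (w i * |b i|)))).congr_deriv ?_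
  push_cast
  ring

end FirstOrder

section Stationarity

variable {ι E : Type*} [AddCommGroup E] [Module ℝ E]

/-- `g` is a subgradient at `z₀` of `z ↦ N (z - y)`, encoded as a linear functional. -/
def IsDualSubgradAt (N : Seminorm ℝ E) (y : E) (g : E →ₗ[ℝ] ℝ) (z₀ : E) : Prop :=
  ∀ z, N (z₀ - y) + g (z - z₀) ≤ N (z - y)

theorem IsDualSubgradAt.abs_apply_le {N : Seminorm ℝ E} {y z₀ : E} {g : E →ₗ[ℝ] ℝ}
    (hg : IsDualSubgradAt N y g z₀) (z : E) : |g z| ≤ N z := by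
  have apply_le (z : E) : g z ≤ N z := by
    have subgrad := hg (z₀ + z)
    rw [add_sub_cancel_left, add_sub_right_comm] at subgrad
    linarith [map_add_le_add N (z₀ - y) z]
  exact abs_le'.2 ⟨apply_le z, by simpa using apply_le (-z)⟩

variable [DecidableEq ι]

/-- First-order stationarity, in the form multiplied by `βᵢ`, of `β` for the objective
`N (A β - y) + λ₂ ‖β‖₂² + P(β)`, where `ρ i` stands for `βᵢ * ∂ᵢP(β)`. With
`ρ i = λ₁ q |βᵢ| ^ q` this is generalized first-order stationarity for the `ℓ_q` penalty. -/
def IsScaledStationary (N : Seminorm ℝ E) (A : (ι → ℝ) →ₗ[ℝ] E) (y : E) (lam2 : ℝ)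
    (ρ β : ι → ℝ) : Prop :=
  ∃ g : E →ₗ[ℝ] ℝ, IsDualSubgradAt N y g (A β) ∧
    ∀ i, β i * g (A (Pi.single i 1)) + 2 * lam2 * β i ^ 2 + ρ i = 0

variable {N : Seminorm ℝ E} {A : (ι → ℝ) →ₗ[ℝ] E} {y : E} {lam1 lam2 q a : ℝ}

theorem IsScaledStationary.add_le {ρ β : ι → ℝ} (h : IsScaledStationary N A y lam2 ρ β) (i : ι) :
    2 * lam2 * β i ^ 2 + ρ i ≤ |β i| * N (A (Pi.single i 1)) := by
  obtain ⟨g, hg, hstat⟩ := h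
  calc 2 * lam2 * β i ^ 2 + ρ i = -(β i * g (A (Pi.single i 1))) := by linarith [hstat i]
    _ ≤ |β i| * |g (A (Pi.single i 1))| := by rw [← abs_mul]; exact neg_le_abs _
    _ ≤ |β i| * N (A (Pi.single i 1)) := by gcongr; exact hg.abs_apply_le _

theorem lt_abs_of_isScaledStationary_truncatedWeight (hmu : 0 < q * lam1) (hlam2 : 0 ≤ lam2)
    (hq1 : q < 1) (ha : 0 < a) {β : ι → ℝ}
    (hβ : IsScaledStationary N A y lam2 (fun i => q * lam1 * (truncatedWeight q a β i * |β i|)) β)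
    {i : ι} (hcap : N (A (Pi.single i 1)) < q * lam1 * a ^ (q - 1)) (hi : β i ≠ 0) :
    a < |β i| := by
  have abs_pos : 0 < |β i| := abs_pos.2 hi
  have scaled_le : |β i| * (q * lam1 * truncatedWeight q a β i) ≤
      |β i| * N (A (Pi.single i 1)) := by
    have := hβ.add_le i
    have : 0 ≤ 2 * lam2 * β i ^ 2 := by positivity
    linarith
  have weight_lt : truncatedWeight q a β i < a ^ (q - 1) :=
    lt_of_mul_lt_mul_left ((le_of_mul_le_mul_left scaled_le abs_pos).trans_lt hcap) hmu.le
  have a_lt_max : a < max a |β i| :=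
    (Real.rpow_lt_rpow_iff_of_neg (lt_max_of_lt_left ha) ha (by linarith)).1 weight_lt
  exact (lt_max_iff.1 a_lt_max).resolve_left (lt_irrefl a)

theorem isScaledStationary_rpow_of_truncatedWeight (hlam1 : 0 < lam1) (hlam2 : 0 ≤ lam2)
    (hq0 : 0 < q) (hq1 : q < 1) (ha : 0 < a)
    (hcap : ∀ i, N (A (Pi.single i 1)) < q * lam1 * a ^ (q - 1)) {β : ι → ℝ}
    (hβ : IsScaledStationary N A y lam2
      (fun i => q * lam1 * (truncatedWeight q a β i * |β i|)) β) :
    IsScaledStationary N A y lam2 (fun i => lam1 * q * |β i| ^ q) β := by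
  convert hβ using 2 with i
  by_cases hi : β i = 0
  · simp [hi, hq0.ne']
  · have a_lt := lt_abs_of_isScaledStationary_truncatedWeight (by positivity) hlam2 hq1 ha hβ
      (hcap i) hi
    rw [truncatedWeight, max_eq_right a_lt.le, rpow_sub_one_mul_self (abs_pos.2 hi), mul_comm lam1]

variable [Fintype ι]

theorem isScaledStationary_of_isMinOn {mu : ℝ} {w b : ι → ℝ}
    (hb : IsMinOn (fun β => N (A β - y) + elasticNet lam2 mu w β) univ b) :
    IsScaledStationary N A y lam2 (fun i => mu * (w i * |b i|)) b := by
  let c : (ι → ℝ) →ₗ[ℝ] ℝ :=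
    -Fintype.linearCombination ℝ fun i => 2 * lam2 * b i ^ 2 + mu * (w i * |b i|)
  have descent (e : ι → ℝ) :
      N (A b - y) + c e ≤ N (A b - y + (A ∘ₗ LinearMap.mulLeft ℝ b) e) := by
    have key := sub_lineDeriv_le_of_isMinOn_add (convexOn_seminorm_map_sub N A y)
      (hasLineDerivAt_elasticNet_mul lam2 mu w b e) hb
    simpa [c, Fintype.linearCombination_apply, sub_eq_add_neg, mul_comm, add_right_comm] using key
  obtain ⟨g, hg_eq, hg_comp, hg_le⟩ := exists_linearMap_eq_seminorm_of_add_le N _ _ c descent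
  refine ⟨g, fun z => ?_, fun i => ?_⟩
  · rw [← hg_eq, ← map_add, sub_add_sub_comm, add_comm (A b), add_sub_add_right_eq_sub]
    exact hg_le _
  · have hcomp := LinearMap.congr_fun hg_comp (Pi.single i 1)
    have mul_single : b * Pi.single i 1 = b i • Pi.single i (1 : ℝ) := by
      ext k
      rcases eq_or_ne k i with rfl | hk
      · simp
      · simp [hk]
    have : b i * g (A (Pi.single i 1)) = -(2 * lam2 * b i ^ 2 + mu * (w i * |b i|)) := by
      simpa [c, mul_single, Fintype.linearCombination_apply_single] using hcomp
    linarith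

theorem reweighted_accumulation_stationary_general (N : Seminorm ℝ E) (A : (ι → ℝ) →ₗ[ℝ] E)
    (y : E) (hlam1 : 0 < lam1) (hlam2 : 0 ≤ lam2) (hq0 : 0 < q) (hq1 : q < 1) (ha : 0 < a)
    (hcap : ∀ i, N (A (Pi.single i 1)) < q * lam1 * a ^ (q - 1)) {βseq : ℕ → ι → ℝ}
    (hseq : ∀ k, IsMinOn
      (fun β => N (A β - y) + elasticNet lam2 (q * lam1) (truncatedWeight q a (βseq k)) β) univ
      (βseq (k + 1)))
    {βbar : ι → ℝ} (hβbar : MapClusterPt βbar atTop βseq) :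
    IsScaledStationary N A y lam2 (fun i => lam1 * q * |βbar i| ^ q) βbar ∧
      ∀ i, 2 * lam2 * βbar i ^ 2 + lam1 * q * |βbar i| ^ q ≤
        |βbar i| * N (A (Pi.single i 1)) := by
  have hcont : Continuous fun β => N (A β - y) :=
    (convexOn_seminorm_map_sub N A y).locallyLipschitz.continuous
  have hmin := isMinOn_truncatedWeight_of_mapClusterPt hcont hlam1.le hq0.le hq1.le ha hseq hβbar
  have hstat := isScaledStationary_rpow_of_truncatedWeight hlam1 hlam2 hq0 hq1 ha hcap
    (isScaledStationary_of_isMinOn hmin)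
  exact ⟨hstat, hstat.add_le⟩

end Stationarity

section LrNorm

variable {n p : ℕ}

/-- The exponent `r` as an extended nonnegative real, as used by Mathlib's `PiLp`. -/
def LrIndex.exponent : LrIndex → ENNReal
  | .one => 1
  | .two => 2
  | .inf => ⊤

instance (r : LrIndex) : Fact (1 ≤ r.exponent) :=
  ⟨by cases r <;> simp [LrIndex.exponent]⟩

theorem lrNorm_eq_norm_toLp (r : LrIndex) (z : Fin n → ℝ) :
    lrNorm r z = ‖(WithLp.toLp r.exponent z : PiLp r.exponent fun _ => ℝ)‖ := by
  cases r
  · change lrNorm .one z = ‖(WithLp.toLp 1 z : PiLp 1 fun _ => ℝ)‖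
    simp [lrNorm, PiLp.norm_eq_of_L1]
  · change lrNorm .two z = ‖(WithLp.toLp 2 z : PiLp 2 fun _ => ℝ)‖
    simp [lrNorm, PiLp.norm_eq_of_L2]
  · change lrNorm .inf z = ‖(WithLp.toLp ⊤ z : PiLp ⊤ fun _ => ℝ)‖
    simp [lrNorm, PiLp.norm_eq_ciSup]

theorem lrNorm_pos (r : LrIndex) {z : Fin n → ℝ} (hz : z ≠ 0) : 0 < lrNorm r z := by
  rw [lrNorm_eq_norm_toLp, norm_pos_iff]
  simpa using hz

/-- `lrNorm r` as a seminorm on `Fin n → ℝ`, whose norm instance in Mathlib is the sup norm. -/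
noncomputable def lrSeminorm (n : ℕ) (r : LrIndex) : Seminorm ℝ (Fin n → ℝ) :=
  Seminorm.of (lrNorm r)
    (fun x z => by simpa only [lrNorm_eq_norm_toLp, WithLp.toLp_add] using norm_add_le _ _)
    (fun c z => by simp only [lrNorm_eq_norm_toLp, WithLp.toLp_smul, norm_smul])

theorem lrSeminorm_mulVecLin_single (r : LrIndex) (X : Matrix (Fin n) (Fin p) ℝ) (i : Fin p) :
    lrSeminorm n r (X.mulVecLin (Pi.single i 1)) = lrNorm r fun j => X j i := by
  rw [Matrix.mulVecLin_apply, Matrix.mulVec_single_one]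
  rfl

theorem objG_eq_lrSeminorm_add_elasticNet (r : LrIndex) (X : Matrix (Fin n) (Fin p) ℝ)
    (y : Fin n → ℝ) (lam1 lam2 q : ℝ) (w β : Fin p → ℝ) :
    objG r X y lam1 lam2 q w β =
      lrSeminorm n r (X.mulVecLin β - y) + elasticNet lam2 (q * lam1) w β :=
  add_assoc _ _ _

theorem IsScaledStationary.isGenStat {r : LrIndex} {X : Matrix (Fin n) (Fin p) ℝ}
    {y : Fin n → ℝ} {lam1 lam2 q : ℝ} {β : Fin p → ℝ}
    (h : IsScaledStationary (lrSeminorm n r) X.mulVecLin y lam2 (fun i => lam1 * q * |β i| ^ q) β) :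
    IsGenStat r X y lam1 lam2 q β := by
  obtain ⟨g, hg, hstat⟩ := h
  have apply_eq_sum (z : Fin n → ℝ) : g z = ∑ j, g (Pi.single j 1) * z j := by
    conv_lhs => rw [← LinearMap.sum_single_apply (fun _ => ℝ) z, map_sum]
    refine Finset.sum_congr rfl fun j _ => ?_
    have single_eq_smul : Pi.single j (z j) = z j • Pi.single j (1 : ℝ) := by
      rw [← Pi.single_smul', smul_eq_mul, mul_one]
    rw [single_eq_smul, map_smul, smul_eq_mul, mul_comm]
  refine ⟨fun j => g (Pi.single j 1), fun z => ?_, fun i => ?_⟩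
  · have subgrad := hg z
    rw [apply_eq_sum (z - _)] at subgrad
    exact subgrad
  · have stat := hstat i
    rw [apply_eq_sum] at stat
    simpa [mul_comm] using stat

end LrNorm

section Threshold

variable {q : ℝ}

theorem weightVec_rpow_sub_one {p : ℕ} {a : ℝ} (hq1 : q ≤ 1) (ha : 0 < a) (β : Fin p → ℝ) :
    weightVec q (a ^ (q - 1)) β = truncatedWeight q a β := by
  funext i
  have anti {s t : ℝ} (hs : 0 < s) (hst : s ≤ t) : t ^ (q - 1) ≤ s ^ (q - 1) :=
    Real.rpow_le_rpow_of_nonpos hs hst (by linarith)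
  unfold weightVec truncatedWeight
  split_ifs with hi
  · rw [hi, abs_zero, max_eq_left ha.le]
  · rcases le_total a |β i| with h | h
    · rw [max_eq_right h, min_eq_right (anti ha h)]
    · rw [max_eq_left h, min_eq_left (anti (abs_pos.2 hi) h)]

theorem lt_mul_rpow_of_lt_mul_div_rpow (hq0 : 0 < q) (hq1 : q < 1) {c mu L ε : ℝ} (hc : 0 < c)
    (hmu : 0 < mu) (hL : 0 < L) (hε : 0 < ε) (h : ε < c * (L / mu) ^ (q / (q - 1))) :
    L < mu * (ε / c) ^ ((q - 1) / q) := by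
  rw [← div_lt_iff₀' hmu, ← inv_div q, Real.lt_rpow_inv_iff_of_neg (by positivity) (by positivity)
    (div_neg_of_pos_of_neg hq0 (by linarith)), div_lt_iff₀' hc]
  exact h

theorem div_rpow_lt_of_mul_rpow_lt (hq1 : q < 1) {c L t : ℝ} (hc : 0 ≤ c) (hL : 0 < L)
    (ht : 0 < t) (h : c * t ^ q < t * L) : (c / L) ^ (1 / (1 - q)) < t := by
  rw [one_div, Real.rpow_inv_lt_iff_of_pos (by positivity) ht.le (by linarith),
    Real.rpow_sub ht, Real.rpow_one, div_lt_div_iff₀ hL (by positivity)]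
  exact h

end Threshold

/-- any accumulation point of the iterative reweighted sequence is a
generalized first-order stationary point of F, with the lower bound on its
nonzero entries. -/
theorem reweighted_accumulation_stationary {n p : ℕ} (hn : 0 < n) (hp : 0 < p)
    (r : LrIndex) (X : Matrix (Fin n) (Fin p) ℝ) (y : Fin n → ℝ)
    (lam1 lam2 q ε : ℝ) (hlam1 : 0 < lam1) (hlam2 : 0 < lam2)
    (hq0 : 0 < q) (hq1 : q < 1)
    (hX : ∀ i : Fin p, (fun j => X j i) ≠ (0 : Fin n → ℝ))
    (hε : 0 < ε)
    (hεb : ∀ i : Fin p,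
      ε < (p : ℝ) * lam1 * (lrNorm r (fun j => X j i) / (q * lam1)) ^ (q / (q - 1)))
    (βseq : ℕ → Fin p → ℝ)
    (hseq : ∀ k : ℕ, ∀ β : Fin p → ℝ,
      objG r X y lam1 lam2 q
          (weightVec q ((ε / (p * lam1)) ^ ((q - 1) / q)) (βseq k)) (βseq (k + 1))
        ≤ objG r X y lam1 lam2 q
          (weightVec q ((ε / (p * lam1)) ^ ((q - 1) / q)) (βseq k)) β)
    (βbar : Fin p → ℝ) (ks : ℕ → ℕ) (hks : StrictMono ks)
    (hconv : Filter.Tendsto (fun j => βseq (ks j)) Filter.atTop (nhds βbar)) :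
    IsGenStat r X y lam1 lam2 q βbar ∧
    ∀ i : Fin p, βbar i ≠ 0 →
      (q * lam1 / lrNorm r (fun j => X j i)) ^ (1 / (1 - q)) < |βbar i| := by
  have hplam1 : 0 < p * lam1 := mul_pos (Nat.cast_pos.2 hp) hlam1
  have hu_pos : 0 < (ε / (p * lam1)) ^ ((q - 1) / q) := Real.rpow_pos_of_pos (div_pos hε hplam1) _
  have hL (i : Fin p) : 0 < lrNorm r fun j => X j i := lrNorm_pos r (hX i)
  obtain ⟨a, ha, hu⟩ : ∃ a : ℝ, 0 < a ∧ a ^ (q - 1) = (ε / (p * lam1)) ^ ((q - 1) / q) :=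
    ⟨_, Real.rpow_pos_of_pos hu_pos _, Real.rpow_inv_rpow hu_pos.le (sub_neg.2 hq1).ne⟩
  have hcap (i : Fin p) : lrNorm r (fun j => X j i) < q * lam1 * a ^ (q - 1) := hu ▸
    lt_mul_rpow_of_lt_mul_div_rpow hq0 hq1 hplam1 (mul_pos hq0 hlam1) (hL i) hε (hεb i)
  simp only [← hu, weightVec_rpow_sub_one hq1.le ha, objG_eq_lrSeminorm_add_elasticNet] at hseq
  simp only [← lrSeminorm_mulVecLin_single] at hL hcap ⊢
  obtain ⟨hstat, hbound⟩ := reweighted_accumulation_stationary_general (lrSeminorm n r) X.mulVecLin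
    y hlam1 hlam2.le hq0 hq1 ha hcap (fun k => isMinOn_univ_iff.2 (hseq k))
    (hconv.mapClusterPt.of_comp hks.tendsto_atTop)
  refine ⟨hstat.isGenStat, fun i hi => ?_⟩
  have hsq : 0 < 2 * lam2 * βbar i ^ 2 := by positivity
  exact div_rpow_lt_of_mul_rpow_lt hq1 (by positivity) (hL i) (abs_pos.2 hi)
    (by linarith [hbound i])
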